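/- Fix real numbers x0 < x1 and y ∈ (x0, x1], and let α : ℝ → ℝ be Lebesgue integrable on (x0, x1). Then E_α^{(x0,y)}(ω) → 1 as |ω| → ∞ along real ω. -/

import Mathlib

open MeasureTheory

/-- The iterates `A_ω^j 𝟙` of the conjugate-linear Volterra operator
`A_ω f(t) = ∫_{x0}^t α(s) e^{2i(s−x0)ω} conj(f(s)) ds`. -/
noncomputable def Aiter (x0 : ℝ) (α : ℝ → ℝ) (ω : ℂ) : ℕ → ℝ → ℂ
  | 0 => fun _ => 1
  | j + 1 => fun t =>
      ∫ s in x0..t,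
        (α s : ℂ) * Complex.exp (2 * Complex.I * ((s : ℂ) - (x0 : ℂ)) * ω)
          * (starRingEnd ℂ) (Aiter x0 α ω j s)

/-- The harmonic exponential `E_α^{(x0,y)}(ω) = Σ_{j≥0} A_ω^j 𝟙(y)`. -/
noncomputable def harmE (x0 y : ℝ) (α : ℝ → ℝ) (ω : ℂ) : ℂ :=
  ∑' j : ℕ, Aiter x0 α ω j y

/-!
`E_α` is the Neumann series of a conjugate-linear Volterra operator whose kernel has modulus `|α|`
at every real frequency. Hence its `j`-th term is bounded by `‖α‖ ^ j / j!`, uniformly in `ω`, and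
by dominated convergence for series it is enough to find the limit of each term. The term with
`j = 0` is `1`; the term with `j = 1` tends to `0` by the Riemann–Lebesgue lemma; and dominated
convergence under the integral sign carries the limit `0` from each term to the next.
-/

open Filter Set
open scoped ComplexConjugate Interval Nat Topology

section PowersOfPrimitives

variable {f b : ℝ → ℝ} {a t : ℝ}

lemma absolutelyContinuousOnInterval_pow (hf : AbsolutelyContinuousOnInterval f a t) (n : ℕ) :
    AbsolutelyContinuousOnInterval (fun s => f s ^ n) a t := by
  induction n with
  | zero =>
    simpa only [pow_zero] using
      (contDiffOn_const (c := (1 : ℝ))).absolutelyContinuousOnInterval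
  | succ n ih => simpa only [pow_succ] using ih.fun_mul hf

lemma integral_mul_primitive_pow (hb : IntervalIntegrable b volume a t) (n : ℕ) :
    ∫ s in a..t, b s * (∫ u in a..s, b u) ^ n = (∫ u in a..t, b u) ^ (n + 1) / (n + 1) := by
  have hac : AbsolutelyContinuousOnInterval (fun s => ∫ u in a..s, b u) a t :=
    hb.absolutelyContinuousOnInterval_intervalIntegral left_mem_uIcc
  have hderiv : ∀ᵐ s, s ∈ Ι a t →
      deriv (fun r => (∫ u in a..r, b u) ^ (n + 1)) s
        = (n + 1) * (b s * (∫ u in a..s, b u) ^ n) := by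
    filter_upwards [hb.ae_hasDerivAt_integral] with s hs hst
    rw [((hs (uIoc_subset_uIcc hst) a left_mem_uIcc).fun_pow (n + 1)).deriv]
    push_cast [Nat.add_sub_cancel]
    ring
  have hftc := (absolutelyContinuousOnInterval_pow hac (n + 1)).integral_deriv_eq_sub
  rw [intervalIntegral.integral_congr_ae hderiv, intervalIntegral.integral_const_mul,
    intervalIntegral.integral_same, zero_pow n.succ_ne_zero, sub_zero] at hftc
  rw [eq_div_iff n.cast_add_one_ne_zero, mul_comm, hftc]

lemma exists_abs_primitive_eq_mul (hb : 0 ≤ᵐ[volume] b) (a t : ℝ) :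
    ∃ ε : ℝ, |ε| = 1 ∧ ∀ s ∈ Ι a t, |∫ u in a..s, b u| = ε * ∫ u in a..s, b u := by
  rcases le_total a t with hat | hta
  · refine ⟨1, abs_one, fun s hs => ?_⟩
    rw [uIoc_of_le hat] at hs
    rw [one_mul, abs_of_nonneg (intervalIntegral.integral_nonneg_of_ae hs.1.le hb)]
  · refine ⟨-1, by simp, fun s hs => ?_⟩
    rw [uIoc_of_ge hta] at hs
    rw [intervalIntegral.integral_symm s a, abs_neg,
      abs_of_nonneg (intervalIntegral.integral_nonneg_of_ae hs.2 hb), neg_one_mul, neg_neg]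

lemma abs_integral_mul_abs_primitive_pow (hb : IntervalIntegrable b volume a t)
    (hb₀ : 0 ≤ᵐ[volume] b) (n : ℕ) :
    |∫ s in a..t, b s * |∫ u in a..s, b u| ^ n| = |∫ u in a..t, b u| ^ (n + 1) / (n + 1) := by
  obtain ⟨ε, hε, habs⟩ := exists_abs_primitive_eq_mul hb₀ a t
  have hpull : ∫ s in a..t, b s * |∫ u in a..s, b u| ^ n
      = ε ^ n * ∫ s in a..t, b s * (∫ u in a..s, b u) ^ n := by
    rw [← intervalIntegral.integral_const_mul]
    refine intervalIntegral.integral_congr_ae (.of_forall fun s hs => ?_)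
    rw [habs s hs]
    ring
  rw [hpull, integral_mul_primitive_pow hb, abs_mul, abs_pow, hε, one_pow, one_mul, abs_div,
    abs_pow, abs_of_pos (Nat.cast_add_one_pos (α := ℝ) n)]

end PowersOfPrimitives

section ConjVolterra

variable {𝕜 : Type*} [RCLike 𝕜]

/-- The iterates `V ^ j 1` of the conjugate-linear Volterra operator
`V f t = ∫ s in a..t, k s * conj (f s)`. The weight `k` carries all the dependence on a parameter,
which separates the convergence argument from the shape of the harmonic kernel. -/
noncomputable def conjVolterraIter (a : ℝ) (k : ℝ → 𝕜) : ℕ → ℝ → 𝕜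
  | 0 => fun _ => 1
  | j + 1 => fun t => ∫ s in a..t, k s * conj (conjVolterraIter a k j s)

variable {a t : ℝ} {b : ℝ → ℝ}

lemma continuousOn_conjVolterraIter {k : ℝ → 𝕜} (hk : IntervalIntegrable k volume a t) (j : ℕ) :
    ContinuousOn (conjVolterraIter a k j) [[a, t]] := by
  induction j with
  | zero => exact continuousOn_const
  | succ j ih =>
    exact intervalIntegral.continuousOn_primitive_interval'
      (hk.mul_continuousOn (RCLike.continuous_conj.comp_continuousOn ih)) left_mem_uIcc

lemma intervalIntegrable_mul_conj_conjVolterraIter {k : ℝ → 𝕜}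
    (hk : IntervalIntegrable k volume a t) (j : ℕ) :
    IntervalIntegrable (fun s => k s * conj (conjVolterraIter a k j s)) volume a t :=
  hk.mul_continuousOn (RCLike.continuous_conj.comp_continuousOn
    (continuousOn_conjVolterraIter hk j))

lemma intervalIntegrable_mul_abs_primitive_pow_div (hb : IntervalIntegrable b volume a t)
    (n : ℕ) (c : ℝ) :
    IntervalIntegrable (fun s => b s * (|∫ u in a..s, b u| ^ n / c)) volume a t :=
  hb.mul_continuousOn
    (((intervalIntegral.continuousOn_primitive_interval' hb left_mem_uIcc).abs.pow n).div_const c)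

lemma norm_conjVolterraIter_le {k : ℝ → 𝕜} (hb : IntervalIntegrable b volume a t)
    (hk : ∀ᵐ s, ‖k s‖ ≤ b s) (j : ℕ) :
    ‖conjVolterraIter a k j t‖ ≤ |∫ u in a..t, b u| ^ j / j ! := by
  induction j generalizing t with
  | zero => simp [conjVolterraIter]
  | succ j ih =>
    have hb₀ : 0 ≤ᵐ[volume] b := hk.mono fun s hs => (norm_nonneg _).trans hs
    have hbound : ∀ᵐ s ∂volume.restrict (Ι a t),
        ‖k s * conj (conjVolterraIter a k j s)‖ ≤ b s * (|∫ u in a..s, b u| ^ j / j !) := by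
      rw [ae_restrict_iff' measurableSet_uIoc]
      filter_upwards [hk, hb₀] with s hks hbs hst
      rw [norm_mul, RCLike.norm_conj]
      exact mul_le_mul hks
        (ih (hb.mono_set (uIcc_subset_uIcc_left (uIoc_subset_uIcc hst)))) (norm_nonneg _) hbs
    calc ‖conjVolterraIter a k (j + 1) t‖
        ≤ |∫ s in a..t, b s * (|∫ u in a..s, b u| ^ j / j !)| :=
          intervalIntegral.norm_integral_le_abs_of_norm_le hbound
            (intervalIntegrable_mul_abs_primitive_pow_div hb j _)
      _ = |∫ s in a..t, b s * |∫ u in a..s, b u| ^ j| / j ! := by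
          simp only [← mul_div_assoc, intervalIntegral.integral_div, abs_div, Nat.abs_cast]
      _ = |∫ u in a..t, b u| ^ (j + 1) / (j + 1)! := by
          rw [abs_integral_mul_abs_primitive_pow hb hb₀, div_div, Nat.factorial_succ,
            Nat.cast_mul, Nat.cast_succ]

variable {ι : Type*} {l : Filter ι} [l.IsCountablyGenerated] {k : ι → ℝ → 𝕜}

lemma tendsto_conjVolterraIter_succ (hb : IntervalIntegrable b volume a t)
    (hint : ∀ i, IntervalIntegrable (k i) volume a t) (hk : ∀ᵐ s, ∀ i, ‖k i s‖ ≤ b s)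
    (hlim : ∀ s ∈ [[a, t]], Tendsto (fun i => ∫ u in a..s, k i u) l (𝓝 0)) (j : ℕ) :
    Tendsto (fun i => conjVolterraIter a (k i) (j + 1) t) l (𝓝 0) := by
  induction j generalizing t with
  | zero => simpa [conjVolterraIter] using hlim t right_mem_uIcc
  | succ j ih =>
    have hsub {s : ℝ} (hs : s ∈ Ι a t) : [[a, s]] ⊆ [[a, t]] :=
      uIcc_subset_uIcc_left (uIoc_subset_uIcc hs)
    have hmeas (i : ι) : AEStronglyMeasurable
        (fun s => k i s * conj (conjVolterraIter a (k i) (j + 1) s)) (volume.restrict (Ι a t)) :=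
      (intervalIntegrable_mul_conj_conjVolterraIter (hint i) (j + 1)).def'.aestronglyMeasurable
    have hbound (i : ι) : ∀ᵐ s, s ∈ Ι a t → ‖k i s * conj (conjVolterraIter a (k i) (j + 1) s)‖
        ≤ b s * (|∫ u in a..s, b u| ^ (j + 1) / (j + 1)!) := by
      filter_upwards [hk] with s hks hs
      rw [norm_mul, RCLike.norm_conj]
      exact mul_le_mul (hks i) (norm_conjVolterraIter_le (hb.mono_set (hsub hs))
        (hk.mono fun _ h => h i) _) (norm_nonneg _) ((norm_nonneg _).trans (hks i))
    have hpointwise : ∀ᵐ s, s ∈ Ι a t →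
        Tendsto (fun i => k i s * conj (conjVolterraIter a (k i) (j + 1) s)) l (𝓝 0) := by
      filter_upwards [hk] with s hks hs
      have hiter : Tendsto (fun i => conjVolterraIter a (k i) (j + 1) s) l (𝓝 0) :=
        ih (hb.mono_set (hsub hs)) (fun i => (hint i).mono_set (hsub hs))
          fun r hr => hlim r (hsub hs hr)
      have hconj : Tendsto (fun i => conj (conjVolterraIter a (k i) (j + 1) s)) l (𝓝 0) := by
        simpa only [map_zero, Function.comp_def] using
          (RCLike.continuous_conj.tendsto (0 : 𝕜)).comp hiter
      exact isBoundedUnder_le_mul_tendsto_zero (isBoundedUnder_of ⟨b s, hks⟩) hconj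
    simpa only [conjVolterraIter, intervalIntegral.integral_zero] using
      intervalIntegral.tendsto_integral_filter_of_dominated_convergence _ (.of_forall hmeas)
        (.of_forall hbound) (intervalIntegrable_mul_abs_primitive_pow_div hb _ _) hpointwise

lemma tendsto_tsum_conjVolterraIter (hb : IntervalIntegrable b volume a t)
    (hint : ∀ i, IntervalIntegrable (k i) volume a t) (hk : ∀ᵐ s, ∀ i, ‖k i s‖ ≤ b s)
    (hlim : ∀ s ∈ [[a, t]], Tendsto (fun i => ∫ u in a..s, k i u) l (𝓝 0)) :
    Tendsto (fun i => ∑' j, conjVolterraIter a (k i) j t) l (𝓝 1) := by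
  have hterm (j : ℕ) :
      Tendsto (fun i => conjVolterraIter a (k i) j t) l (𝓝 ((Pi.single 0 1 : ℕ → 𝕜) j)) := by
    cases j with
    | zero => simpa [conjVolterraIter] using tendsto_const_nhds
    | succ j => simpa using tendsto_conjVolterraIter_succ hb hint hk hlim j
  simpa only [tsum_pi_single] using tendsto_tsum_of_dominated_convergence
    (Real.summable_pow_div_factorial |∫ u in a..t, b u|) hterm
    (.of_forall fun i j => norm_conjVolterraIter_le hb (hk.mono fun _ h => h i) j)

end ConjVolterra

section RiemannLebesgue

variable {E : Type*} [NormedAddCommGroup E] [NormedSpace ℂ E]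

lemma tendsto_integral_exp_mul_I_smul_cocompact (f : ℝ → E) :
    Tendsto (fun ω : ℝ => ∫ s, Complex.exp ((s * ω : ℝ) * Complex.I) • f s)
      (cocompact ℝ) (𝓝 0) := by
  have hscale : -(2 * Real.pi)⁻¹ ≠ 0 := by simp [Real.pi_ne_zero]
  refine ((Real.tendsto_integral_exp_smul_cocompact f).comp
    (tendsto_cocompact_mul_left₀ hscale)).congr fun ω => integral_congr_ae (.of_forall fun s => ?_)
  have hphase : 2 * Real.pi * -(s * (-(2 * Real.pi)⁻¹ * ω)) = s * ω := by
    field_simp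
  simp only [Circle.smul_def, Real.fourierChar_apply, hphase]

lemma tendsto_intervalIntegral_exp_mul_I_smul_cocompact (f : ℝ → E) (a b : ℝ) :
    Tendsto (fun ω : ℝ => ∫ s in a..b, Complex.exp ((s * ω : ℝ) * Complex.I) • f s)
      (cocompact ℝ) (𝓝 0) := by
  have hset := (tendsto_integral_exp_mul_I_smul_cocompact ((Ι a b).indicator f)).const_smul
    (if a ≤ b then (1 : ℝ) else -1)
  simpa only [smul_zero, ← indicator_smul, integral_indicator measurableSet_uIoc,
    ← intervalIntegral.intervalIntegral_eq_integral_uIoc] using hset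

end RiemannLebesgue

section HarmonicKernel

/-- The weight `s ↦ α(s) e^{2i(s−x0)ω}` of the conjugate-linear Volterra operator `A_ω`. -/
noncomputable def harmonicKernel (x0 : ℝ) (α : ℝ → ℝ) (ω : ℂ) (s : ℝ) : ℂ :=
  (α s : ℂ) * Complex.exp (2 * Complex.I * ((s : ℂ) - (x0 : ℂ)) * ω)

lemma Aiter_eq_conjVolterraIter (x0 : ℝ) (α : ℝ → ℝ) (ω : ℂ) (j : ℕ) :
    Aiter x0 α ω j = conjVolterraIter x0 (harmonicKernel x0 α ω) j := by
  induction j with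
  | zero => rfl
  | succ j ih => simp only [Aiter, ih, conjVolterraIter, harmonicKernel]

lemma norm_harmonicKernel_ofReal (x0 : ℝ) (α : ℝ → ℝ) (ω s : ℝ) :
    ‖harmonicKernel x0 α ω s‖ = |α s| := by
  simp [harmonicKernel, Complex.norm_exp]

lemma intervalIntegrable_harmonicKernel {α : ℝ → ℝ} {a b : ℝ}
    (hα : IntervalIntegrable α volume a b) (x0 : ℝ) (ω : ℂ) :
    IntervalIntegrable (harmonicKernel x0 α ω) volume a b :=
  IntervalIntegrable.mul_continuousOn ⟨hα.1.ofReal, hα.2.ofReal⟩ (by fun_prop)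

lemma tendsto_integral_harmonicKernel_cocompact (x0 : ℝ) (α : ℝ → ℝ) (a b : ℝ) :
    Tendsto (fun ω : ℝ => ∫ s in a..b, harmonicKernel x0 α ω s) (cocompact ℝ) (𝓝 0) := by
  refine ((tendsto_intervalIntegral_exp_mul_I_smul_cocompact (fun s => (α (s + x0) : ℂ))
    (a - x0) (b - x0)).comp (tendsto_cocompact_mul_left₀ two_ne_zero)).congr fun ω => ?_
  rw [Function.comp_apply, ← intervalIntegral.integral_comp_sub_right _ x0]
  refine intervalIntegral.integral_congr fun s _ => ?_
  simp only [harmonicKernel, sub_add_cancel, smul_eq_mul, mul_comm (α s : ℂ)]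
  congr 2
  push_cast
  ring

end HarmonicKernel

theorem harmonic_exponential_tendsto_one_general
    (x0 y : ℝ) (α : ℝ → ℝ) (hα : IntervalIntegrable α volume x0 y) :
    Tendsto (fun ω : ℝ => harmE x0 y α (ω : ℂ)) (cocompact ℝ) (𝓝 1) := by
  have : (cocompact ℝ).IsCountablyGenerated := by
    rw [cocompact_eq_atBot_atTop]
    infer_instance
  simp only [harmE, Aiter_eq_conjVolterraIter]
  exact tendsto_tsum_conjVolterraIter hα.abs
    (fun ω => intervalIntegrable_harmonicKernel hα x0 ω)
    (.of_forall fun s ω => (norm_harmonicKernel_ofReal x0 α ω s).le)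
    (fun s _ => tendsto_integral_harmonicKernel_cocompact x0 α x0 s)

/-- Corollary (cor-harmonic-exponential-bounded): `E_α^{(x0,y)}(ω) → 1` as `|ω| → ∞`
along real `ω`. -/
theorem harmonic_exponential_tendsto_one
    (x0 x1 y : ℝ) (hx : x0 < x1) (hy : y ∈ Set.Ioc x0 x1)
    (α : ℝ → ℝ) (hα : IntegrableOn α (Set.Ioo x0 x1)) :
    Filter.Tendsto (fun ω : ℝ => harmE x0 y α (ω : ℂ)) (Filter.cocompact ℝ) (nhds 1) := by
  exact harmonic_exponential_tendsto_one_general x0 y α <|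
    (intervalIntegrable_iff_integrableOn_Ioo_of_le hy.1.le).2
      (hα.mono_set (Set.Ioo_subset_Ioo_right hy.2))
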